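/- Fix Δ^{ij} ∈ F⊗F for 0 ≤ i,j ≤ 1, each symmetric weak Frobenius, satisfying condition (A2): Δ^{00}_{12}·Δ^{11}_{23} = Δ^{01}_{12}·Δ^{10}_{23} in F^{⊗3}. Set S := Δ^{10} − Δ^{01} and β := Δ^{00} + Δ^{10}x₁ + Δ^{01}x₂ + Δ^{11}x₁x₂. Then: (i) in (F⊗F)[x₁,x₂], β² − σ(β)·β = (x₁ − x₂)·S·β (equivalently ∂^β(β) = S·β); (ii) in F^{⊗3}[x₁,x₂,x₃], with β_{pq} := Δ^{00}_{pq} + Δ^{10}_{pq}x_p + Δ^{01}_{pq}x_q + Δ^{11}_{pq}x_p x_q for p < q, and ρ_k (k = 1, 2) the unique 𝕜-linear operator with (x_k − x_{k+1})·ρ_k(a) = β_{k,k+1}·a − σ_k(a)·β_{k,k+1} (the right-hand side is always divisible by x_k − x_{k+1}), one has ρ₁(β_{13}) = ρ₂(β_{12}) + β_{13}·S_{23} = −σ₂(ρ₁(β_{23})), where S_{23} places S in tensor slots 2,3. -/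

import Mathlib

/-!
For `Δ^{ij}` symmetric weak Frobenius satisfying (A2), with `S = Δ¹⁰ − Δ⁰¹` and
`β = Δ⁰⁰ + Δ¹⁰x₁ + Δ⁰¹x₂ + Δ¹¹x₁x₂`:
(i) `∂^β(β) = S·β`,  and
(ii) `ρ₁(β₁₃) = ρ₂(β₁₂) + β₁₃·S₂₃ = −σ₂(ρ₁(β₂₃))` in `F^{⊗3}[x₁,x₂,x₃]`.
Polynomial rings over the (noncommutative) rings `F⊗F` and `F^{⊗3}` are modelled as
`(F⊗F) ⊗ 𝕜[x₁,x₂]` and `(F⊗(F⊗F)) ⊗ 𝕜[x₁,x₂,x₃]` respectively.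
-/

open scoped TensorProduct
open MvPolynomial

variable (k F : Type*)

/-- Weak Frobenius elements of `F ⊗ F`: `(a⊗b)·Δ = Δ·(b⊗a)` for all `a, b ∈ F`. -/
def IsWeakFrobenius [CommSemiring k] [Ring F] [Algebra k F] (Δ : F ⊗[k] F) : Prop :=
  ∀ a b : F, (a ⊗ₜ[k] b) * Δ = Δ * (b ⊗ₜ[k] a)

/-- Symmetric elements of `F ⊗ F`: fixed by the flip. -/
def IsSymmEl [CommSemiring k] [Ring F] [Algebra k F] (Δ : F ⊗[k] F) : Prop :=
  (Algebra.TensorProduct.comm k F F) Δ = Δ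

/-- The polynomial ring `(F⊗F)[x₁,x₂]`, modelled as `(F⊗F) ⊗ 𝕜[x₁,x₂]`. -/
abbrev PolyFF (k F : Type*) [CommSemiring k] [Ring F] [Algebra k F] :=
  (F ⊗[k] F) ⊗[k] MvPolynomial (Fin 2) k

/-- The automorphism `σ` of `(F⊗F)[x₁,x₂]`. -/
noncomputable def sigmaP [CommSemiring k] [Ring F] [Algebra k F] :
    PolyFF k F ≃ₐ[k] PolyFF k F :=
  Algebra.TensorProduct.congr (Algebra.TensorProduct.comm k F F)
    (MvPolynomial.renameEquiv k (Equiv.swap (0 : Fin 2) 1))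

/-- The triple tensor power `F^{⊗3}`. -/
abbrev T3 (k F : Type*) [CommSemiring k] [Ring F] [Algebra k F] := F ⊗[k] (F ⊗[k] F)

/-- The embedding `F⊗F → F^{⊗3}` placing the two legs in positions 1, 2. -/
noncomputable def emb12 [CommSemiring k] [Ring F] [Algebra k F] :
    F ⊗[k] F →ₗ[k] T3 k F :=
  LinearMap.lTensor F ((TensorProduct.mk k F F).flip 1)

/-- The embedding `F⊗F → F^{⊗3}` placing the two legs in positions 1, 3. -/
noncomputable def emb13 [CommSemiring k] [Ring F] [Algebra k F] :
    F ⊗[k] F →ₗ[k] T3 k F :=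
  LinearMap.lTensor F (TensorProduct.mk k F F 1)

/-- The embedding `F⊗F → F^{⊗3}` placing the two legs in positions 2, 3. -/
noncomputable def emb23 [CommSemiring k] [Ring F] [Algebra k F] :
    F ⊗[k] F →ₗ[k] T3 k F :=
  TensorProduct.mk k F (F ⊗[k] F) 1

/-- The polynomial ring `F^{⊗3}[x₁,x₂,x₃]`, modelled as `F^{⊗3} ⊗ 𝕜[x₁,x₂,x₃]`. -/
abbrev PolyT3 (k F : Type*) [CommSemiring k] [Ring F] [Algebra k F] :=
  T3 k F ⊗[k] MvPolynomial (Fin 3) k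

/-- The automorphism `σ₁` of `F^{⊗3}[x₁,x₂,x₃]`: swaps tensor slots 1, 2 and the
variables `x₁, x₂`. -/
noncomputable def sigma1 [CommSemiring k] [Ring F] [Algebra k F] :
    PolyT3 k F ≃ₐ[k] PolyT3 k F :=
  Algebra.TensorProduct.congr (Algebra.TensorProduct.leftComm k F F F)
    (MvPolynomial.renameEquiv k (Equiv.swap (0 : Fin 3) 1))

/-- The automorphism `σ₂` of `F^{⊗3}[x₁,x₂,x₃]`: swaps tensor slots 2, 3 and the
variables `x₂, x₃`. -/
noncomputable def sigma2 [CommSemiring k] [Ring F] [Algebra k F] :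
    PolyT3 k F ≃ₐ[k] PolyT3 k F :=
  Algebra.TensorProduct.congr
    (Algebra.TensorProduct.congr (AlgEquiv.refl (R := k) (A₁ := F))
      (Algebra.TensorProduct.comm k F F))
    (MvPolynomial.renameEquiv k (Equiv.swap (1 : Fin 3) 2))

/-- `β_{pq} ∈ F^{⊗3}[x₁,x₂,x₃]`: the element `β` placed in tensor slots `p, q` with
variables `x_p, x_q`, given the four coefficients of `β` and the corresponding
embedding `F⊗F → F^{⊗3}`. -/
noncomputable def betaPQ [CommSemiring k] [Ring F] [Algebra k F]
    (Δ00 Δ10 Δ01 Δ11 : F ⊗[k] F) (empq : F ⊗[k] F →ₗ[k] T3 k F) (p q : Fin 3) :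
    PolyT3 k F :=
  (empq Δ00) ⊗ₜ[k] (1 : MvPolynomial (Fin 3) k)
    + (empq Δ10) ⊗ₜ[k] (X p : MvPolynomial (Fin 3) k)
    + (empq Δ01) ⊗ₜ[k] (X q : MvPolynomial (Fin 3) k)
    + (empq Δ11) ⊗ₜ[k] ((X p : MvPolynomial (Fin 3) k) * X q)

/-!
A weak Frobenius element intertwines every `t ∈ F^{⊗3}` with a permutation of its slots, for
example `t·Δ₁₂ = Δ₁₂·s₁₂(t)`. Hence `σ₁(β₁₃)·β₁₂ = β₁₂·β₁₃|_{x₁ = x₂}`, and since `β` is affine in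
each variable, `β₁₃ − β₁₃|_{x₁ = x₂}` is `x₁ − x₂` times the coefficient of `x₁` in `β₁₃`. The other
two values of `ρ₁` and `ρ₂` are computed in the same way. Symmetry makes the products
`Δ^{ij}₁₂·Δ^{pq}₁₃` symmetric in the pairs `ij` and `pq`, and (A2) gives
`Δ¹¹₁₂·Δ⁰⁰₁₃ = Δ¹⁰₁₂·Δ⁰¹₁₃`; the identities then hold coefficient by coefficient.
-/

section Biaffine

variable {S A : Type*}

section Defs

variable [Mul S] [Add A] [SMul S A]

/-- The polynomial `∑ xⁱ yʲ D^{ij}`, affine in each variable, with coefficients `D i j` in an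
`S`-module `A` and evaluated at `x, y ∈ S`. -/
def biaffine (D : Fin 2 → Fin 2 → A) (x y : S) : A :=
  D 0 0 + x • D 1 0 + y • D 0 1 + (x * y) • D 1 1

/-- The slope of `biaffine D · y`. -/
def leftSlope (D : Fin 2 → Fin 2 → A) (y : S) : A :=
  D 1 0 + y • D 1 1

/-- The slope of `biaffine D x ·`. -/
def rightSlope (D : Fin 2 → Fin 2 → A) (x : S) : A :=
  D 0 1 + x • D 1 1

end Defs

section Map

variable {T B Φ G : Type*} [Add A] [Add B] [SMul S A] [SMul T B] [FunLike Φ A B]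
  [AddHomClass Φ A B]

lemma map_biaffine [Mul S] [Mul T] [FunLike G S T] [MulHomClass G S T] (φ : Φ) (g : G)
    (h : ∀ (s : S) (a : A), φ (s • a) = g s • φ a) (D : Fin 2 → Fin 2 → A) (x y : S) :
    φ (biaffine D x y) = biaffine (fun i j ↦ φ (D i j)) (g x) (g y) := by
  simp only [biaffine, map_add, h, map_mul]

lemma map_leftSlope (φ : Φ) (g : S → T) (h : ∀ (s : S) (a : A), φ (s • a) = g s • φ a)
    (D : Fin 2 → Fin 2 → A) (y : S) :
    φ (leftSlope D y) = leftSlope (fun i j ↦ φ (D i j)) (g y) := by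
  simp only [leftSlope, map_add, h]

end Map

variable [CommRing S]

section Module

variable [AddCommGroup A] [Module S A]

lemma biaffine_sub_biaffine_left (D : Fin 2 → Fin 2 → A) (x y z : S) :
    biaffine D x z - biaffine D y z = (x - y) • leftSlope D z := by
  simp only [biaffine, leftSlope]
  module

lemma biaffine_sub_biaffine_right (D : Fin 2 → Fin 2 → A) (x y z : S) :
    biaffine D x y - biaffine D x z = (y - z) • rightSlope D x := by
  simp only [biaffine, rightSlope]
  module

lemma biaffine_sub_biaffine_swap (D : Fin 2 → Fin 2 → A) (x y : S) :
    biaffine D x y - biaffine D y x = (x - y) • (D 1 0 - D 0 1) := by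
  simp only [biaffine]
  module

end Module

variable [Ring A] [Algebra S A] {P Q R : Fin 2 → Fin 2 → A}

lemma semiconjBy_biaffine_right {a : A} (h : ∀ i j, SemiconjBy a (P i j) (Q i j)) (x y : S) :
    SemiconjBy a (biaffine P x y) (biaffine Q x y) :=
  ((((h 0 0).add_right ((h 1 0).smul_right x)).add_right ((h 0 1).smul_right y))).add_right
    ((h 1 1).smul_right (x * y))

lemma semiconjBy_biaffine_left {b c : A} (h : ∀ i j, SemiconjBy (P i j) b c) (x y : S) :
    SemiconjBy (biaffine P x y) b c :=
  ((((h 0 0).add_left ((h 1 0).smul_left x)).add_left ((h 0 1).smul_left y))).add_left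
    ((h 1 1).smul_left (x * y))

lemma semiconjBy_rightSlope {b c : A} (h : ∀ i j, SemiconjBy (P i j) b c) (x : S) :
    SemiconjBy (rightSlope P x) b c :=
  (h 0 1).add_left ((h 1 1).smul_left x)

lemma semiconjBy_biaffine (h : ∀ i j p q, SemiconjBy (P i j) (Q p q) (R p q)) (x y u v : S) :
    SemiconjBy (biaffine P x y) (biaffine Q u v) (biaffine R u v) :=
  semiconjBy_biaffine_right (fun p q ↦ semiconjBy_biaffine_left (fun i j ↦ h i j p q) x y) u v

lemma biaffine_mul_self_sub_swap_mul (x y : S) :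
    biaffine P x y * biaffine P x y - biaffine P y x * biaffine P x y =
      (x - y) • (P 1 0 - P 0 1) * biaffine P x y := by
  rw [← sub_mul, biaffine_sub_biaffine_swap]

lemma biaffine_mul_sub_mul_biaffine_left (h : ∀ i j p q, SemiconjBy (P i j) (Q p q) (R p q))
    (x y z : S) :
    biaffine P x y * biaffine Q x z - biaffine R y z * biaffine P x y =
      (x - y) • (biaffine P x y * leftSlope Q z) := by
  rw [← (semiconjBy_biaffine h x y y z).eq, ← mul_sub, biaffine_sub_biaffine_left, mul_smul_comm]

lemma biaffine_mul_sub_mul_biaffine_right (h : ∀ i j p q, SemiconjBy (P i j) (Q p q) (R p q))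
    (x y z : S) :
    biaffine P y z * biaffine Q x y - biaffine R x z * biaffine P y z =
      (y - z) • (biaffine P y z * rightSlope Q x) := by
  rw [← (semiconjBy_biaffine h y z x z).eq, ← mul_sub, biaffine_sub_biaffine_right, mul_smul_comm]

lemma biaffine_mul_sub_mul_biaffine_neg (h : ∀ i j p q, SemiconjBy (P i j) (R p q) (Q p q))
    (x y z : S) :
    biaffine P x y * biaffine R y z - biaffine Q x z * biaffine P x y =
      (x - y) • -(leftSlope Q z * biaffine P x y) := by
  rw [(semiconjBy_biaffine h x y y z).eq, ← sub_mul, ← neg_sub (biaffine Q x z),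
    biaffine_sub_biaffine_left, neg_mul, smul_mul_assoc, smul_neg]

section Exchange

variable (hsymm : ∀ i j p q, P i j * Q p q = P p q * Q i j) (hA2 : P 1 1 * Q 0 0 = P 1 0 * Q 0 1)

include hsymm hA2

lemma biaffine_mul_leftSlope (x y z : S) :
    biaffine P x y * leftSlope Q z = leftSlope P y * biaffine Q x z := by
  simp only [biaffine, leftSlope, add_mul, mul_add, smul_mul_assoc, mul_smul_comm]
  rw [hsymm 0 0 1 0, hsymm 0 0 1 1, hsymm 0 1 1 0, hsymm 0 1 1 1, hsymm 1 1 1 0, hA2]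
  module

lemma biaffine_mul_leftSlope_eq_add (x y z : S) :
    biaffine P x y * leftSlope Q z =
      rightSlope P x * biaffine Q y z + biaffine P x z * (Q 1 0 - Q 0 1) := by
  simp only [biaffine, leftSlope, rightSlope, add_mul, mul_add, mul_sub, smul_mul_assoc,
    mul_smul_comm]
  rw [hsymm 0 0 1 0, hsymm 0 0 1 1, hsymm 0 0 0 1, hsymm 0 1 1 0, hsymm 0 1 1 1, hsymm 1 1 1 0, hA2]
  module

end Exchange

theorem eq_add_biaffine_mul_of_smul_eq (hPQ : ∀ i j p q, SemiconjBy (P i j) (Q p q) (R p q))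
    (hRP : ∀ i j p q, SemiconjBy (R i j) (P p q) (Q p q))
    (hsymm : ∀ i j p q, P i j * Q p q = P p q * Q i j) (hA2 : P 1 1 * Q 0 0 = P 1 0 * Q 0 1)
    {x y z : S} (hxy : IsSMulRegular A (x - y)) (hyz : IsSMulRegular A (y - z)) {u v : A}
    (hu : (x - y) • u = biaffine P x y * biaffine Q x z - biaffine R y z * biaffine P x y)
    (hv : (y - z) • v = biaffine R y z * biaffine P x y - biaffine Q x z * biaffine R y z) :
    u = v + biaffine Q x z * (R 1 0 - R 0 1) := by
  have hu' : u = biaffine P x y * leftSlope Q z :=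
    hxy (hu.trans (biaffine_mul_sub_mul_biaffine_left hPQ x y z))
  have hv' : v = biaffine R y z * rightSlope P x :=
    hyz (hv.trans (biaffine_mul_sub_mul_biaffine_right hRP x y z))
  have hslope : rightSlope P x * biaffine Q y z = biaffine R y z * rightSlope P x :=
    semiconjBy_rightSlope (fun i j ↦ semiconjBy_biaffine_right (hPQ i j) y z) x
  have hcoeff (i j : Fin 2) : biaffine P x z * Q i j = biaffine Q x z * R i j :=
    (semiconjBy_biaffine_left (fun p q ↦ hPQ p q i j) x z).eq.trans
      (semiconjBy_biaffine_right (hRP i j) x z)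
  rw [hu', hv', biaffine_mul_leftSlope_eq_add hsymm hA2, hslope, mul_sub, mul_sub, hcoeff, hcoeff]

theorem eq_neg_map_of_smul_eq (hPQ : ∀ i j p q, SemiconjBy (P i j) (Q p q) (R p q))
    (hPR : ∀ i j p q, SemiconjBy (P i j) (R p q) (Q p q))
    (hsymm : ∀ i j p q, P i j * Q p q = P p q * Q i j) (hA2 : P 1 1 * Q 0 0 = P 1 0 * Q 0 1)
    {x y z : S} (hxy : IsSMulRegular A (x - y)) {u w : A}
    (hu : (x - y) • u = biaffine P x y * biaffine Q x z - biaffine R y z * biaffine P x y)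
    (hw : (x - y) • w = biaffine P x y * biaffine R y z - biaffine Q x z * biaffine P x y)
    (φ : A →+* A) (g : S →+* S) (hφ : ∀ (s : S) (a : A), φ (s • a) = g s • φ a)
    (hP : ∀ i j, φ (P i j) = Q i j) (hQ : ∀ i j, φ (Q i j) = P i j)
    (hx : g x = x) (hy : g y = z) (hz : g z = y) :
    u = -φ w := by
  have hu' : u = biaffine P x y * leftSlope Q z :=
    hxy (hu.trans (biaffine_mul_sub_mul_biaffine_left hPQ x y z))
  have hw' : w = -(leftSlope Q z * biaffine P x y) :=
    hxy (hw.trans (biaffine_mul_sub_mul_biaffine_neg hPR x y z))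
  have hφw : φ (leftSlope Q z * biaffine P x y) = leftSlope P y * biaffine Q x z := by
    rw [map_mul, map_leftSlope φ g hφ, map_biaffine φ g hφ, hx, hy, hz]
    simp only [hP, hQ]
  rw [hu', hw', map_neg, neg_neg, hφw, biaffine_mul_leftSlope hsymm hA2]

end Biaffine

section RightAlgebra

variable {k} {R R' S S' : Type*} [CommSemiring k] [Semiring R] [Algebra k R] [Semiring R']
  [Algebra k R'] [CommSemiring S] [Algebra k S] [CommSemiring S'] [Algebra k S']

attribute [local instance] Algebra.TensorProduct.rightAlgebra

lemma one_tmul_mul_eq_right_smul (s : S) (t : R ⊗[k] S) : (1 : R) ⊗ₜ[k] s * t = s • t :=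
  (Algebra.smul_def s t).symm

lemma right_smul_tmul (s u : S) (r : R) : s • (r ⊗ₜ[k] u) = r ⊗ₜ[k] (s * u) := by
  rw [← one_tmul_mul_eq_right_smul, Algebra.TensorProduct.tmul_mul_tmul, one_mul]

lemma congr_right_smul (f : R ≃ₐ[k] R') (g : S ≃ₐ[k] S') (s : S) (t : R ⊗[k] S) :
    Algebra.TensorProduct.congr f g (s • t) = g s • Algebra.TensorProduct.congr f g t := by
  rw [← one_tmul_mul_eq_right_smul, ← one_tmul_mul_eq_right_smul, map_mul,
    Algebra.TensorProduct.congr_apply, Algebra.TensorProduct.map_tmul, map_one]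
  rfl

end RightAlgebra

section TensorBiaffine

variable {k} {R S : Type*} [CommRing k] [Ring R] [Algebra k R] [CommRing S] [Algebra k S]

/-- The polynomial `∑ xⁱ yʲ D^{ij}` with coefficients in a `k`-algebra `R`, evaluated at elements
`x, y` of a commutative `k`-algebra `S`, as an element of `R ⊗ S`. -/
def tensorBiaffine (D : Fin 2 → Fin 2 → R) (x y : S) : R ⊗[k] S :=
  D 0 0 ⊗ₜ 1 + D 1 0 ⊗ₜ x + D 0 1 ⊗ₜ y + D 1 1 ⊗ₜ (x * y)

lemma congr_tensorBiaffine (τ : R ≃ₐ[k] R) (π : S ≃ₐ[k] S) (D : Fin 2 → Fin 2 → R) (x y : S) :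
    Algebra.TensorProduct.congr τ π (tensorBiaffine D x y) =
      tensorBiaffine (fun i j ↦ τ (D i j)) (π x) (π y) := by
  simp [tensorBiaffine]

attribute [local instance] Algebra.TensorProduct.rightAlgebra

lemma tensorBiaffine_eq_biaffine (D : Fin 2 → Fin 2 → R) (x y : S) :
    tensorBiaffine D x y = biaffine (fun i j ↦ D i j ⊗ₜ[k] (1 : S)) x y := by
  simp only [tensorBiaffine, biaffine, right_smul_tmul, mul_one]

lemma tensorBiaffine_mul_self_sub_swap_mul (D : Fin 2 → Fin 2 → R) (x y : S) :
    tensorBiaffine D x y * tensorBiaffine D x y - tensorBiaffine D y x * tensorBiaffine D x y =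
      (1 : R) ⊗ₜ[k] (x - y) * ((D 1 0 - D 0 1) ⊗ₜ[k] (1 : S)) * tensorBiaffine D x y := by
  simp only [tensorBiaffine_eq_biaffine, one_tmul_mul_eq_right_smul, TensorProduct.sub_tmul]
  exact biaffine_mul_self_sub_swap_mul x y

lemma semiconjBy_tmul_one {a b c : R} (h : SemiconjBy a b c) :
    SemiconjBy (a ⊗ₜ[k] (1 : S)) (b ⊗ₜ[k] (1 : S)) (c ⊗ₜ[k] (1 : S)) :=
  h.map (Algebra.TensorProduct.includeLeft : R →ₐ[k] R ⊗[k] S)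

variable {P Q D : Fin 2 → Fin 2 → R} {x y z : S} {u v w : R ⊗[k] S}

theorem eq_add_tensorBiaffine_mul_of_mul_eq
    (hPQ : ∀ i j p q, SemiconjBy (P i j) (Q p q) (D p q))
    (hDP : ∀ i j p q, SemiconjBy (D i j) (P p q) (Q p q))
    (hsymm : ∀ i j p q, P i j * Q p q = P p q * Q i j) (hA2 : P 1 1 * Q 0 0 = P 1 0 * Q 0 1)
    (hxy : IsLeftRegular ((1 : R) ⊗ₜ[k] (x - y))) (hyz : IsLeftRegular ((1 : R) ⊗ₜ[k] (y - z)))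
    (hu : (1 : R) ⊗ₜ[k] (x - y) * u =
      tensorBiaffine P x y * tensorBiaffine Q x z - tensorBiaffine D y z * tensorBiaffine P x y)
    (hv : (1 : R) ⊗ₜ[k] (y - z) * v =
      tensorBiaffine D y z * tensorBiaffine P x y - tensorBiaffine Q x z * tensorBiaffine D y z) :
    u = v + tensorBiaffine Q x z * ((D 1 0 - D 0 1) ⊗ₜ[k] (1 : S)) := by
  simp only [IsLeftRegular, one_tmul_mul_eq_right_smul, tensorBiaffine_eq_biaffine,
    TensorProduct.sub_tmul] at hxy hyz hu hv ⊢
  refine eq_add_biaffine_mul_of_smul_eq (fun i j p q ↦ semiconjBy_tmul_one (hPQ i j p q))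
    (fun i j p q ↦ semiconjBy_tmul_one (hDP i j p q)) (fun i j p q ↦ ?_) ?_ hxy hyz hu hv
  · simp only [Algebra.TensorProduct.tmul_mul_tmul, hsymm i j p q]
  · simp only [Algebra.TensorProduct.tmul_mul_tmul, hA2]

theorem eq_neg_congr_of_mul_eq (hPQ : ∀ i j p q, SemiconjBy (P i j) (Q p q) (D p q))
    (hPD : ∀ i j p q, SemiconjBy (P i j) (D p q) (Q p q))
    (hsymm : ∀ i j p q, P i j * Q p q = P p q * Q i j) (hA2 : P 1 1 * Q 0 0 = P 1 0 * Q 0 1)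
    (hxy : IsLeftRegular ((1 : R) ⊗ₜ[k] (x - y)))
    (hu : (1 : R) ⊗ₜ[k] (x - y) * u =
      tensorBiaffine P x y * tensorBiaffine Q x z - tensorBiaffine D y z * tensorBiaffine P x y)
    (hw : (1 : R) ⊗ₜ[k] (x - y) * w =
      tensorBiaffine P x y * tensorBiaffine D y z - tensorBiaffine Q x z * tensorBiaffine P x y)
    (τ : R ≃ₐ[k] R) (π : S ≃ₐ[k] S) (hP : ∀ i j, τ (P i j) = Q i j)
    (hQ : ∀ i j, τ (Q i j) = P i j) (hx : π x = x) (hy : π y = z) (hz : π z = y) :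
    u = -Algebra.TensorProduct.congr τ π w := by
  simp only [IsLeftRegular, one_tmul_mul_eq_right_smul, tensorBiaffine_eq_biaffine]
    at hxy hu hw
  refine eq_neg_map_of_smul_eq (fun i j p q ↦ semiconjBy_tmul_one (hPQ i j p q))
    (fun i j p q ↦ semiconjBy_tmul_one (hPD i j p q)) (fun i j p q ↦ ?_) ?_ hxy hu hw
    (Algebra.TensorProduct.congr τ π : R ⊗[k] S →+* R ⊗[k] S) (π : S →+* S)
    (congr_right_smul τ π) (fun i j ↦ ?_) (fun i j ↦ ?_) hx hy hz
  · simp only [Algebra.TensorProduct.tmul_mul_tmul, hsymm i j p q]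
  · simp only [Algebra.TensorProduct.tmul_mul_tmul, hA2]
  · simp [hP]
  · simp [hQ]

end TensorBiaffine

section Regular

variable {k} {σ : Type*}

/-- Division by the variable `X i`, discarding the monomials not divisible by it, as a linear map;
this is `MvPolynomial.divMonomial` at `X i`. -/
noncomputable def divX [CommSemiring k] (i : σ) : MvPolynomial σ k →ₗ[k] MvPolynomial σ k where
  toFun f := f.divMonomial (Finsupp.single i 1)
  map_add' f g := add_divMonomial f g _
  map_smul' c f := by ext; simp

lemma divX_X_mul [CommSemiring k] (i : σ) (f : MvPolynomial σ k) : divX i (X i * f) = f :=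
  X_mul_divMonomial i f

lemma isLeftRegular_one_tmul_of_leftInverse {R S : Type*} [CommSemiring k] [Semiring R]
    [Algebra k R] [CommSemiring S] [Algebra k S] {s : S} (d : S →ₗ[k] S)
    (hd : Function.LeftInverse d (s * ·)) : IsLeftRegular ((1 : R) ⊗ₜ[k] s) := by
  suffices h : ∀ t : R ⊗[k] S, d.lTensor R ((1 : R) ⊗ₜ[k] s * t) = t from
    Function.LeftInverse.injective h
  intro t
  induction t using TensorProduct.induction_on with
  | zero => simp
  | tmul r u => rw [Algebra.TensorProduct.tmul_mul_tmul, one_mul, LinearMap.lTensor_tmul, hd u]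
  | add t u ht hu => rw [mul_add, map_add, ht, hu]

-- The substitution `X i ↦ X i + X j` turns `X i - X j` into `X i`, and conjugates `divX i` into a
-- linear left inverse of multiplication by `X i - X j`.
lemma isLeftRegular_one_tmul_X_sub_X [CommRing k] {R : Type*} [Ring R] [Algebra k R] {i j : σ}
    (hij : i ≠ j) : IsLeftRegular ((1 : R) ⊗ₜ[k] (X i - X j : MvPolynomial σ k)) := by
  classical
  let shift (u : MvPolynomial σ k) : MvPolynomial σ k →ₐ[k] MvPolynomial σ k :=
    aeval (Function.update X i (X i + u))
  have shift_X_sub_X : shift (X j) (X i - X j) = X i := by simp [shift, hij.symm]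
  have shift_neg_shift (f) : shift (-X j) (shift (X j) f) = f := by
    suffices h : (shift (-X j)).comp (shift (X j)) = AlgHom.id k _ from DFunLike.congr_fun h f
    ext l : 1
    obtain rfl | hl := eq_or_ne l i <;> simp [shift, hij.symm, *]
  refine isLeftRegular_one_tmul_of_leftInverse
    ((shift (-X j)).toLinearMap ∘ₗ divX i ∘ₗ (shift (X j)).toLinearMap) fun f ↦ ?_
  simp only [LinearMap.comp_apply, AlgHom.toLinearMap_apply, map_mul, shift_X_sub_X, divX_X_mul,
    shift_neg_shift]

end Regular

section WeakFrobenius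

variable {k F} [CommSemiring k] [Ring F] [Algebra k F] {Δ Δ' : F ⊗[k] F}

variable (k F) in
/-- The automorphism of `F^{⊗3}` exchanging the first two tensor factors. -/
noncomputable abbrev swap12 : T3 k F ≃ₐ[k] T3 k F :=
  Algebra.TensorProduct.leftComm k F F F

variable (k F) in
/-- The automorphism of `F^{⊗3}` exchanging the last two tensor factors. -/
noncomputable abbrev swap23 : T3 k F ≃ₐ[k] T3 k F :=
  Algebra.TensorProduct.congr AlgEquiv.refl (Algebra.TensorProduct.comm k F F)

lemma swap12_emb13 (Δ : F ⊗[k] F) : swap12 k F (emb13 k F Δ) = emb23 k F Δ := by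
  induction Δ using TensorProduct.induction_on with
  | zero => simp
  | tmul a b => simp [emb13, emb23]
  | add Δ Δ' h h' => simp only [map_add, h, h']

lemma swap12_emb23 (Δ : F ⊗[k] F) : swap12 k F (emb23 k F Δ) = emb13 k F Δ := by
  rw [← swap12_emb13]
  exact (swap12 k F).symm_apply_apply _

lemma swap23_emb12 (Δ : F ⊗[k] F) : swap23 k F (emb12 k F Δ) = emb13 k F Δ := by
  induction Δ using TensorProduct.induction_on with
  | zero => simp
  | tmul a b => simp [emb12, emb13]
  | add Δ Δ' h h' => simp only [map_add, h, h']

lemma swap23_swap23 (t : T3 k F) : swap23 k F (swap23 k F t) = t :=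
  (swap23 k F).symm_apply_apply t

lemma swap23_emb13 (Δ : F ⊗[k] F) : swap23 k F (emb13 k F Δ) = emb12 k F Δ := by
  rw [← swap23_emb12, swap23_swap23]

lemma swap23_emb23 (Δ : F ⊗[k] F) :
    swap23 k F (emb23 k F Δ) = emb23 k F (Algebra.TensorProduct.comm k F F Δ) := by
  simp [emb23]

lemma emb12_eq_assoc (Δ : F ⊗[k] F) :
    emb12 k F Δ = Algebra.TensorProduct.assoc k k k F F F (Δ ⊗ₜ[k] 1) := by
  induction Δ using TensorProduct.induction_on with
  | zero => simp
  | tmul a b => simp [emb12]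
  | add Δ Δ' h h' => simp only [map_add, TensorProduct.add_tmul, h, h']

namespace IsWeakFrobenius

lemma mul_emb12 (h : IsWeakFrobenius k F Δ) (t : T3 k F) :
    t * emb12 k F Δ = emb12 k F Δ * swap12 k F t := by
  suffices LinearMap.mulRight k (emb12 k F Δ) =
      LinearMap.mulLeft k (emb12 k F Δ) ∘ₗ (swap12 k F).toLinearMap from
    LinearMap.congr_fun this t
  ext a b c
  have assoc_tmul (x y : F) :
      x ⊗ₜ[k] (y ⊗ₜ[k] c) = Algebra.TensorProduct.assoc k k k F F F ((x ⊗ₜ y) ⊗ₜ c) := rfl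
  change a ⊗ₜ[k] (b ⊗ₜ[k] c) * emb12 k F Δ = emb12 k F Δ * b ⊗ₜ[k] (a ⊗ₜ[k] c)
  rw [emb12_eq_assoc, assoc_tmul, assoc_tmul, ← map_mul, ← map_mul,
    Algebra.TensorProduct.tmul_mul_tmul, Algebra.TensorProduct.tmul_mul_tmul, h a b, one_mul,
    mul_one]

lemma mul_emb23 (h : IsWeakFrobenius k F Δ) (t : T3 k F) :
    t * emb23 k F Δ = emb23 k F Δ * swap23 k F t := by
  suffices LinearMap.mulRight k (emb23 k F Δ) =
      LinearMap.mulLeft k (emb23 k F Δ) ∘ₗ (swap23 k F).toLinearMap from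
    LinearMap.congr_fun this t
  ext a b c
  change a ⊗ₜ[k] (b ⊗ₜ[k] c) * (1 : F) ⊗ₜ[k] Δ = (1 : F) ⊗ₜ[k] Δ * a ⊗ₜ[k] (c ⊗ₜ[k] b)
  rw [Algebra.TensorProduct.tmul_mul_tmul, Algebra.TensorProduct.tmul_mul_tmul, h b c, one_mul,
    mul_one]

lemma mul_emb13 (h : IsWeakFrobenius k F Δ) (t : T3 k F) :
    t * emb13 k F Δ = emb13 k F Δ * swap23 k F (swap12 k F (swap23 k F t)) := by
  rw [← swap23_emb12, ← map_mul, ← h.mul_emb12, map_mul, swap23_swap23]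

lemma semiconjBy_emb12_emb13 (h : IsWeakFrobenius k F Δ) (Δ' : F ⊗[k] F) :
    SemiconjBy (emb12 k F Δ) (emb13 k F Δ') (emb23 k F Δ') := by
  rw [SemiconjBy, h.mul_emb12, swap12_emb23]

lemma semiconjBy_emb12_emb23 (h : IsWeakFrobenius k F Δ) (Δ' : F ⊗[k] F) :
    SemiconjBy (emb12 k F Δ) (emb23 k F Δ') (emb13 k F Δ') := by
  rw [SemiconjBy, h.mul_emb12, swap12_emb13]

lemma semiconjBy_emb23_emb12 (h : IsWeakFrobenius k F Δ) (Δ' : F ⊗[k] F) :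
    SemiconjBy (emb23 k F Δ) (emb12 k F Δ') (emb13 k F Δ') := by
  rw [SemiconjBy, h.mul_emb23, swap23_emb13]

lemma emb12_mul_emb13_comm (h : IsWeakFrobenius k F Δ) (hsymm : IsSymmEl k F Δ)
    (h' : IsWeakFrobenius k F Δ') :
    emb12 k F Δ * emb13 k F Δ' = emb12 k F Δ' * emb13 k F Δ :=
  calc emb12 k F Δ * emb13 k F Δ'
    _ = emb13 k F Δ' * emb23 k F Δ := by
      rw [h'.mul_emb13, swap23_emb12, swap12_emb13, swap23_emb23, hsymm]
    _ = emb23 k F Δ * emb12 k F Δ' := (h.semiconjBy_emb23_emb12 Δ').eq.symm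
    _ = emb12 k F Δ' * emb13 k F Δ := (h'.semiconjBy_emb12_emb13 Δ).eq.symm

lemma swap23_emb12_mul_emb23 (h : IsWeakFrobenius k F Δ) (Δ' : F ⊗[k] F) :
    swap23 k F (emb12 k F Δ * emb23 k F Δ') = emb12 k F Δ' * emb13 k F Δ := by
  rw [(h.semiconjBy_emb12_emb23 Δ').eq, map_mul, swap23_emb13, swap23_emb12]

end IsWeakFrobenius

end WeakFrobenius

section Placed

variable {k F} [CommRing k] [Ring F] [Algebra k F] {Δ : Fin 2 → Fin 2 → F ⊗[k] F}

/-- `β = ∑ Δ^{ij} x₁ⁱ x₂ʲ` in `(F⊗F)[x₁,x₂]`, the upper indices `ij` being the arguments of `Δ`. -/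
noncomputable abbrev beta (Δ : Fin 2 → Fin 2 → F ⊗[k] F) : PolyFF k F :=
  tensorBiaffine Δ (X 0) (X 1)

/-- `β_{pq}` for a matrix of coefficients, with `e` the embedding in the tensor slots `p, q`. -/
noncomputable abbrev placedBeta (Δ : Fin 2 → Fin 2 → F ⊗[k] F) (e : F ⊗[k] F →ₗ[k] T3 k F)
    (p q : Fin 3) : PolyT3 k F :=
  betaPQ k F (Δ 0 0) (Δ 1 0) (Δ 0 1) (Δ 1 1) e p q

lemma placedBeta_eq_tensorBiaffine (Δ : Fin 2 → Fin 2 → F ⊗[k] F) (e : F ⊗[k] F →ₗ[k] T3 k F)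
    (p q : Fin 3) : placedBeta Δ e p q = tensorBiaffine (fun i j ↦ e (Δ i j)) (X p) (X q) :=
  rfl

lemma sigmaP_beta (hsym : ∀ i j, IsSymmEl k F (Δ i j)) :
    sigmaP k F (beta Δ) = tensorBiaffine Δ (X 1) (X 0) := by
  have hΔ (i j : Fin 2) : Algebra.TensorProduct.comm k F F (Δ i j) = Δ i j := hsym i j
  rw [sigmaP, congr_tensorBiaffine]
  simp [hΔ]

lemma sigma1_placedBeta_emb13 (Δ : Fin 2 → Fin 2 → F ⊗[k] F) :
    sigma1 k F (placedBeta Δ (emb13 k F) 0 2) = placedBeta Δ (emb23 k F) 1 2 := by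
  have h2 : Equiv.swap (0 : Fin 3) 1 2 = 2 := by decide
  simp only [placedBeta_eq_tensorBiaffine, sigma1, congr_tensorBiaffine, swap12_emb13,
    renameEquiv_apply, rename_X, Equiv.swap_apply_left, h2]

lemma sigma1_placedBeta_emb23 (Δ : Fin 2 → Fin 2 → F ⊗[k] F) :
    sigma1 k F (placedBeta Δ (emb23 k F) 1 2) = placedBeta Δ (emb13 k F) 0 2 := by
  have h2 : Equiv.swap (0 : Fin 3) 1 2 = 2 := by decide
  simp only [placedBeta_eq_tensorBiaffine, sigma1, congr_tensorBiaffine, swap12_emb23,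
    renameEquiv_apply, rename_X, Equiv.swap_apply_right, h2]

lemma sigma2_placedBeta_emb12 (Δ : Fin 2 → Fin 2 → F ⊗[k] F) :
    sigma2 k F (placedBeta Δ (emb12 k F) 0 1) = placedBeta Δ (emb13 k F) 0 2 := by
  have h0 : Equiv.swap (1 : Fin 3) 2 0 = 0 := by decide
  simp only [placedBeta_eq_tensorBiaffine, sigma2, congr_tensorBiaffine, swap23_emb12,
    renameEquiv_apply, rename_X, Equiv.swap_apply_left, h0]

lemma emb12_mul_emb13_of_emb12_mul_emb23 (hwf : ∀ i j, IsWeakFrobenius k F (Δ i j))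
    (hA2 : emb12 k F (Δ 0 0) * emb23 k F (Δ 1 1) = emb12 k F (Δ 0 1) * emb23 k F (Δ 1 0)) :
    emb12 k F (Δ 1 1) * emb13 k F (Δ 0 0) = emb12 k F (Δ 1 0) * emb13 k F (Δ 0 1) := by
  rw [← (hwf 0 0).swap23_emb12_mul_emb23, hA2, (hwf 0 1).swap23_emb12_mul_emb23]

section DemazureValues

variable (hwf : ∀ i j, IsWeakFrobenius k F (Δ i j)) (hsym : ∀ i j, IsSymmEl k F (Δ i j))
  (hA2 : emb12 k F (Δ 0 0) * emb23 k F (Δ 1 1) = emb12 k F (Δ 0 1) * emb23 k F (Δ 1 0))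
  {u v w : PolyT3 k F}
  (hu : (1 : T3 k F) ⊗ₜ[k] (X 0 - X 1 : MvPolynomial (Fin 3) k) * u =
    placedBeta Δ (emb12 k F) 0 1 * placedBeta Δ (emb13 k F) 0 2 -
      sigma1 k F (placedBeta Δ (emb13 k F) 0 2) * placedBeta Δ (emb12 k F) 0 1)

include hwf hsym hA2 hu

theorem demazure_beta13_eq_add
    (hv : (1 : T3 k F) ⊗ₜ[k] (X 1 - X 2 : MvPolynomial (Fin 3) k) * v =
      placedBeta Δ (emb23 k F) 1 2 * placedBeta Δ (emb12 k F) 0 1 -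
        sigma2 k F (placedBeta Δ (emb12 k F) 0 1) * placedBeta Δ (emb23 k F) 1 2) :
    u = v + placedBeta Δ (emb13 k F) 0 2 *
      (emb23 k F (Δ 1 0 - Δ 0 1) ⊗ₜ[k] (1 : MvPolynomial (Fin 3) k)) := by
  rw [sigma1_placedBeta_emb13] at hu
  simp only [placedBeta_eq_tensorBiaffine] at hu
  rw [sigma2_placedBeta_emb12] at hv
  simp only [placedBeta_eq_tensorBiaffine] at hv
  rw [map_sub, placedBeta_eq_tensorBiaffine]
  exact eq_add_tensorBiaffine_mul_of_mul_eq (P := fun i j ↦ emb12 k F (Δ i j))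
    (Q := fun i j ↦ emb13 k F (Δ i j)) (D := fun i j ↦ emb23 k F (Δ i j))
    (fun i j p q ↦ (hwf i j).semiconjBy_emb12_emb13 (Δ p q))
    (fun i j p q ↦ (hwf i j).semiconjBy_emb23_emb12 (Δ p q))
    (fun i j p q ↦ (hwf i j).emb12_mul_emb13_comm (hsym i j) (hwf p q))
    (emb12_mul_emb13_of_emb12_mul_emb23 hwf hA2) (isLeftRegular_one_tmul_X_sub_X zero_ne_one)
    (isLeftRegular_one_tmul_X_sub_X (by decide)) hu hv

theorem demazure_beta13_eq_neg
    (hw : (1 : T3 k F) ⊗ₜ[k] (X 0 - X 1 : MvPolynomial (Fin 3) k) * w =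
      placedBeta Δ (emb12 k F) 0 1 * placedBeta Δ (emb23 k F) 1 2 -
        sigma1 k F (placedBeta Δ (emb23 k F) 1 2) * placedBeta Δ (emb12 k F) 0 1) :
    u = -sigma2 k F w := by
  rw [sigma1_placedBeta_emb13] at hu
  simp only [placedBeta_eq_tensorBiaffine] at hu
  rw [sigma1_placedBeta_emb23] at hw
  simp only [placedBeta_eq_tensorBiaffine] at hw
  have h0 : Equiv.swap (1 : Fin 3) 2 0 = 0 := by decide
  exact eq_neg_congr_of_mul_eq (P := fun i j ↦ emb12 k F (Δ i j))
    (Q := fun i j ↦ emb13 k F (Δ i j)) (D := fun i j ↦ emb23 k F (Δ i j))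
    (fun i j p q ↦ (hwf i j).semiconjBy_emb12_emb13 (Δ p q))
    (fun i j p q ↦ (hwf i j).semiconjBy_emb12_emb23 (Δ p q))
    (fun i j p q ↦ (hwf i j).emb12_mul_emb13_comm (hsym i j) (hwf p q))
    (emb12_mul_emb13_of_emb12_mul_emb23 hwf hA2) (isLeftRegular_one_tmul_X_sub_X zero_ne_one) hu hw
    (swap23 k F) (renameEquiv k (Equiv.swap (1 : Fin 3) 2)) (fun i j ↦ swap23_emb12 (Δ i j))
    (fun i j ↦ swap23_emb13 (Δ i j)) (by simp [h0]) (by simp) (by simp)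

end DemazureValues

end Placed

theorem stmt12_general [CommRing k] [Ring F] [Algebra k F] (Δ : Fin 2 → Fin 2 → F ⊗[k] F)
    (hwf : ∀ i j, IsWeakFrobenius k F (Δ i j)) (hsym : ∀ i j, IsSymmEl k F (Δ i j))
    (hA2 : emb12 k F (Δ 0 0) * emb23 k F (Δ 1 1) = emb12 k F (Δ 0 1) * emb23 k F (Δ 1 0))
    (ρ1 ρ2 : PolyT3 k F → PolyT3 k F)
    (hρ1 : ∀ a, (1 : T3 k F) ⊗ₜ[k] (X 0 - X 1 : MvPolynomial (Fin 3) k) * ρ1 a =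
      placedBeta Δ (emb12 k F) 0 1 * a - sigma1 k F a * placedBeta Δ (emb12 k F) 0 1)
    (hρ2 : ∀ a, (1 : T3 k F) ⊗ₜ[k] (X 1 - X 2 : MvPolynomial (Fin 3) k) * ρ2 a =
      placedBeta Δ (emb23 k F) 1 2 * a - sigma2 k F a * placedBeta Δ (emb23 k F) 1 2) :
    (beta Δ * beta Δ - sigmaP k F (beta Δ) * beta Δ =
      (1 : F ⊗[k] F) ⊗ₜ[k] (X 0 - X 1 : MvPolynomial (Fin 2) k) *
        ((Δ 1 0 - Δ 0 1) ⊗ₜ[k] (1 : MvPolynomial (Fin 2) k)) * beta Δ) ∧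
    ρ1 (placedBeta Δ (emb13 k F) 0 2) =
        ρ2 (placedBeta Δ (emb12 k F) 0 1) + placedBeta Δ (emb13 k F) 0 2 *
          (emb23 k F (Δ 1 0 - Δ 0 1) ⊗ₜ[k] (1 : MvPolynomial (Fin 3) k)) ∧
      ρ1 (placedBeta Δ (emb13 k F) 0 2) = -sigma2 k F (ρ1 (placedBeta Δ (emb23 k F) 1 2)) :=
  ⟨by rw [sigmaP_beta hsym, tensorBiaffine_mul_self_sub_swap_mul],
    demazure_beta13_eq_add hwf hsym hA2 (hρ1 _) (hρ2 _),
    demazure_beta13_eq_neg hwf hsym hA2 (hρ1 _) (hρ1 _)⟩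

theorem stmt12 [Field k] [Ring F] [Algebra k F] [FiniteDimensional k F]
    (Δ00 Δ10 Δ01 Δ11 : F ⊗[k] F)
    (hwf00 : IsWeakFrobenius k F Δ00) (hsym00 : IsSymmEl k F Δ00)
    (hwf10 : IsWeakFrobenius k F Δ10) (hsym10 : IsSymmEl k F Δ10)
    (hwf01 : IsWeakFrobenius k F Δ01) (hsym01 : IsSymmEl k F Δ01)
    (hwf11 : IsWeakFrobenius k F Δ11) (hsym11 : IsSymmEl k F Δ11)
    -- condition (A2): `Δ^{00}_{12}·Δ^{11}_{23} = Δ^{01}_{12}·Δ^{10}_{23}` in `F^{⊗3}`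
    (hA2 : emb12 k F Δ00 * emb23 k F Δ11 = emb12 k F Δ01 * emb23 k F Δ10)
    -- `S = Δ¹⁰ − Δ⁰¹` and `β = Δ⁰⁰ + Δ¹⁰x₁ + Δ⁰¹x₂ + Δ¹¹x₁x₂`
    (Sel : F ⊗[k] F) (hS : Sel = Δ10 - Δ01)
    (β : PolyFF k F)
    (hβ : β = Δ00 ⊗ₜ[k] (1 : MvPolynomial (Fin 2) k)
        + Δ10 ⊗ₜ[k] (X (0 : Fin 2) : MvPolynomial (Fin 2) k)
        + Δ01 ⊗ₜ[k] (X (1 : Fin 2) : MvPolynomial (Fin 2) k)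
        + Δ11 ⊗ₜ[k] ((X (0 : Fin 2) : MvPolynomial (Fin 2) k) * X 1))
    -- `ρ₁, ρ₂`: the twisted Demazure operators on `F^{⊗3}[x₁,x₂,x₃]`
    (ρ1 ρ2 : PolyT3 k F →ₗ[k] PolyT3 k F)
    (hρ1 : ∀ a : PolyT3 k F,
      ((1 : T3 k F) ⊗ₜ[k] ((X (0 : Fin 3) : MvPolynomial (Fin 3) k) - X 1)) * ρ1 a =
        betaPQ k F Δ00 Δ10 Δ01 Δ11 (emb12 k F) 0 1 * a
          - (sigma1 k F) a * betaPQ k F Δ00 Δ10 Δ01 Δ11 (emb12 k F) 0 1)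
    (hρ2 : ∀ a : PolyT3 k F,
      ((1 : T3 k F) ⊗ₜ[k] ((X (1 : Fin 3) : MvPolynomial (Fin 3) k) - X 2)) * ρ2 a =
        betaPQ k F Δ00 Δ10 Δ01 Δ11 (emb23 k F) 1 2 * a
          - (sigma2 k F) a * betaPQ k F Δ00 Δ10 Δ01 Δ11 (emb23 k F) 1 2) :
    -- (i) `β² − σ(β)·β = (x₁ − x₂)·S·β` in `(F⊗F)[x₁,x₂]`
    (β * β - (sigmaP k F) β * β =
      ((1 : F ⊗[k] F) ⊗ₜ[k]
          ((X (0 : Fin 2) : MvPolynomial (Fin 2) k) - X 1))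
        * (Sel ⊗ₜ[k] (1 : MvPolynomial (Fin 2) k)) * β) ∧
    -- (ii) `ρ₁(β₁₃) = ρ₂(β₁₂) + β₁₃·S₂₃ = −σ₂(ρ₁(β₂₃))` in `F^{⊗3}[x₁,x₂,x₃]`
    (ρ1 (betaPQ k F Δ00 Δ10 Δ01 Δ11 (emb13 k F) 0 2) =
        ρ2 (betaPQ k F Δ00 Δ10 Δ01 Δ11 (emb12 k F) 0 1)
          + betaPQ k F Δ00 Δ10 Δ01 Δ11 (emb13 k F) 0 2
              * ((emb23 k F Sel) ⊗ₜ[k] (1 : MvPolynomial (Fin 3) k)) ∧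
      ρ1 (betaPQ k F Δ00 Δ10 Δ01 Δ11 (emb13 k F) 0 2) =
        - (sigma2 k F) (ρ1 (betaPQ k F Δ00 Δ10 Δ01 Δ11 (emb23 k F) 1 2))) := by
  subst hS hβ
  exact stmt12_general k F ![![Δ00, Δ01], ![Δ10, Δ11]] (by simp [Fin.forall_fin_two, *])
    (by simp [Fin.forall_fin_two, *]) hA2 ρ1 ρ2 hρ1 hρ2
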